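/- Let X be a complete real inner product space, let C¹, C² ⊆ X be nonempty closed convex sets, and let F : X → X be α-cocoercive with α > 1/2. Then the Davis–Yin operator T(z) = z − P_{C¹}(z) + P_{C²}(2P_{C¹}(z) − z − F(P_{C¹}(z))) is an averaged operator: there exist λ ∈ (0, 1) and a nonexpansive (1-Lipschitz) map S : X → X such that T = (1 − λ)·Id + λ·S. -/

import Mathlib

open RealInnerProductSpace

/-!
Metric projections onto convex sets are `1`-cocoercive, that is, firmly nonexpansive. If `p`, `f`
and `q` denote the increments of `J₁`, of `F ∘ J₁` and of the `J₂`-term between two points whose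
difference is `d`, then cocoercivity of `J₁`, `J₂` and `F` together with Young's inequality gives
`⟪p - q, d⟫ ≥ ‖p - q‖ ^ 2 - ⟪f, p - q⟫ + α * ‖f‖ ^ 2 ≥ (1 - 1 / (4 * α)) * ‖p - q‖ ^ 2`.
So `Id - T` is `(1 - 1 / (4 * α))`-cocoercive, and `T` is averaged as soon as this constant
exceeds `1 / 2`, since `β`-cocoercivity of `G` makes `Id - (2 * β) • G` nonexpansive.
-/

section

variable {X : Type*} [NormedAddCommGroup X] [InnerProductSpace ℝ X]

/-- `F` is `α`-cocoercive. The case `α = 1` is firm nonexpansiveness. -/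
def IsCocoercive (α : ℝ) (F : X → X) : Prop :=
  ∀ x y, α * ‖F x - F y‖ ^ 2 ≤ ⟪F x - F y, x - y⟫

/-- `T` is an averaged operator: a proper convex combination of the identity and a nonexpansive
map. -/
def IsAveraged (T : X → X) : Prop :=
  ∃ lam : ℝ, 0 < lam ∧ lam < 1 ∧ ∃ S : X → X, LipschitzWith 1 S ∧
    ∀ z, T z = (1 - lam) • z + lam • S z

/-- `P` is a metric projection onto `C`: it sends each point to a nearest point of `C`. It is a
predicate on `P`, so existence of nearest points enters as the existence of such a `P`. -/
def IsMetricProjection (C : Set X) (P : X → X) : Prop :=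
  ∀ z, P z ∈ C ∧ ∀ x ∈ C, ‖z - P z‖ ≤ ‖z - x‖

/-- The Davis–Yin three-operator splitting map with unit step size. In the splitting method `J₁`
and `J₂` are resolvents of monotone operators; metric projections are the resolvents of normal
cones. -/
def davisYin (J₁ J₂ F : X → X) (z : X) : X :=
  z - J₁ z + J₂ ((2 : ℝ) • J₁ z - z - F (J₁ z))

theorem inner_sub_nonpos_of_forall_norm_sub_le {C : Set X} (hC : Convex ℝ C) {u v : X}
    (hv : v ∈ C) (hmin : ∀ w ∈ C, ‖u - v‖ ≤ ‖u - w‖) {w : X} (hw : w ∈ C) :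
    ⟪u - v, w - v⟫ ≤ 0 := by
  have : Nonempty C := ⟨⟨v, hv⟩⟩
  have hbdd : BddBelow (Set.range fun w : C => ‖u - w‖) :=
    ⟨0, Set.forall_mem_range.2 fun _ => norm_nonneg _⟩
  have hinf : ‖u - v‖ = ⨅ w : C, ‖u - w‖ :=
    le_antisymm (le_ciInf fun w => hmin w w.2) (ciInf_le hbdd ⟨v, hv⟩)
  exact (norm_eq_iInf_iff_real_inner_le_zero hC hv).1 hinf w hw

theorem IsMetricProjection.isCocoercive_one {C : Set X} {P : X → X}
    (hP : IsMetricProjection C P) (hC : Convex ℝ C) : IsCocoercive 1 P := by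
  intro x y
  have hx : ⟪x - P x, P y - P x⟫ ≤ 0 :=
    inner_sub_nonpos_of_forall_norm_sub_le hC (hP x).1 (hP x).2 (hP y).1
  have hy : ⟪y - P y, P x - P y⟫ ≤ 0 :=
    inner_sub_nonpos_of_forall_norm_sub_le hC (hP y).1 (hP y).2 (hP x).1
  have hsum : ⟪P x - P y, x - y⟫ =
      ‖P x - P y‖ ^ 2 - ⟪x - P x, P y - P x⟫ - ⟪y - P y, P x - P y⟫ := by
    rw [real_inner_comm, ← real_inner_self_eq_norm_sq]
    simp only [inner_sub_left, inner_sub_right]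
    ring
  linarith

theorem real_inner_le_mul_norm_sq_add_norm_sq_div {α : ℝ} (hα : 0 < α) (x y : X) :
    ⟪x, y⟫ ≤ α * ‖x‖ ^ 2 + ‖y‖ ^ 2 / (4 * α) := by
  have hsq : α * ‖x‖ ^ 2 + ‖y‖ ^ 2 / (4 * α) - ‖x‖ * ‖y‖ =
      (2 * α * ‖x‖ - ‖y‖) ^ 2 / (4 * α) := by
    field_simp
    ring
  have hnonneg : 0 ≤ (2 * α * ‖x‖ - ‖y‖) ^ 2 / (4 * α) := by positivity
  linarith [real_inner_le_norm x y]

theorem mul_norm_sub_sq_le_inner_sub {α : ℝ} (hα : 0 < α) {d p q f : X}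
    (hp : ‖p‖ ^ 2 ≤ ⟪p, d⟫) (hq : ‖q‖ ^ 2 ≤ ⟪q, (2 : ℝ) • p - d - f⟫)
    (hf : α * ‖f‖ ^ 2 ≤ ⟪f, p⟫) :
    (1 - 1 / (4 * α)) * ‖p - q‖ ^ 2 ≤ ⟪p - q, d⟫ := by
  have hyoung : ⟪f, p - q⟫ ≤ α * ‖f‖ ^ 2 + ‖p - q‖ ^ 2 / (4 * α) :=
    real_inner_le_mul_norm_sq_add_norm_sq_div hα f (p - q)
  calc (1 - 1 / (4 * α)) * ‖p - q‖ ^ 2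
      = ‖p - q‖ ^ 2 - ‖p - q‖ ^ 2 / (4 * α) := by ring
    _ ≤ ‖p - q‖ ^ 2 - ⟪f, p - q⟫ + ⟪f, p⟫ := by linarith
    _ = ‖p‖ ^ 2 + ‖q‖ ^ 2 - ⟪q, (2 : ℝ) • p - f⟫ := by
      rw [norm_sub_sq_real, inner_sub_right, inner_sub_right, real_inner_smul_right,
        real_inner_comm q p, real_inner_comm q f]
      ring
    _ ≤ ⟪p - q, d⟫ := by
      simp only [inner_sub_left, inner_sub_right] at hq ⊢
      linarith

namespace IsCocoercive

variable {α β : ℝ} {F G J₁ J₂ : X → X}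

theorem lipschitzWith_one_sub_smul (hG : IsCocoercive β G) (hβ : 0 ≤ β) :
    LipschitzWith 1 fun z => z - (2 * β) • G z := by
  refine LipschitzWith.mk_one fun x y => ?_
  rw [dist_eq_norm, dist_eq_norm]
  have hincr : x - (2 * β) • G x - (y - (2 * β) • G y) = x - y - (2 * β) • (G x - G y) := by
    module
  rw [hincr]
  refine le_of_sq_le_sq ?_ (norm_nonneg _)
  calc ‖x - y - (2 * β) • (G x - G y)‖ ^ 2
      = ‖x - y‖ ^ 2 - 4 * β * (⟪G x - G y, x - y⟫ - β * ‖G x - G y‖ ^ 2) := by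
        rw [norm_sub_sq_real, real_inner_smul_right, norm_smul, mul_pow, Real.norm_eq_abs, sq_abs,
          real_inner_comm]
        ring
    _ ≤ ‖x - y‖ ^ 2 :=
      sub_le_self _ (mul_nonneg (by positivity) (sub_nonneg.2 (hG x y)))

theorem isAveraged_id_sub (hG : IsCocoercive β G) (hβ : 1 / 2 < β) :
    IsAveraged fun z => z - G z := by
  have hβ_pos : 0 < 2 * β := by linarith
  refine ⟨(2 * β)⁻¹, inv_pos.2 hβ_pos, inv_lt_one_of_one_lt₀ (by linarith),
    fun z => z - (2 * β) • G z, hG.lipschitzWith_one_sub_smul (by linarith), fun z => ?_⟩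
  rw [smul_sub, inv_smul_smul₀ hβ_pos.ne']
  module

theorem sub_davisYin (h₁ : IsCocoercive 1 J₁) (h₂ : IsCocoercive 1 J₂) (hF : IsCocoercive α F)
    (hα : 0 < α) : IsCocoercive (1 - 1 / (4 * α)) fun z => z - davisYin J₁ J₂ F z := by
  intro x y
  let reflected (z : X) : X := (2 : ℝ) • J₁ z - z - F (J₁ z)
  have hreflected : reflected x - reflected y =
      (2 : ℝ) • (J₁ x - J₁ y) - (x - y) - (F (J₁ x) - F (J₁ y)) := by
    simp only [reflected]
    module
  have hincr : x - davisYin J₁ J₂ F x - (y - davisYin J₁ J₂ F y) =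
      J₁ x - J₁ y - (J₂ (reflected x) - J₂ (reflected y)) := by
    simp only [davisYin, reflected]
    abel
  rw [hincr]
  refine mul_norm_sub_sq_le_inner_sub hα ?_ ?_ (hF (J₁ x) (J₁ y))
  · simpa only [one_mul] using h₁ x y
  · simpa only [one_mul, hreflected] using h₂ (reflected x) (reflected y)

end IsCocoercive

theorem stmt_9_general {J₁ J₂ F : X → X} {α : ℝ} (h₁ : IsCocoercive 1 J₁)
    (h₂ : IsCocoercive 1 J₂) (hα : 1 / 2 < α) (hF : IsCocoercive α F) :
    IsAveraged (davisYin J₁ J₂ F) := by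
  have hconst : 1 / 2 < 1 - 1 / (4 * α) := by
    have : 1 / (4 * α) < 1 / 2 := one_div_lt_one_div_of_lt two_pos (by linarith)
    linarith
  simpa only [sub_sub_cancel] using
    (h₁.sub_davisYin h₂ hF (by linarith)).isAveraged_id_sub hconst

end

/-- If `F` is `α`-cocoercive with `α > 1/2`, then the Davis–Yin operator
`T z = z - P₁ z + P₂ (2 • P₁ z - z - F (P₁ z))` (with `P₁, P₂` the metric projections
onto nonempty closed convex sets `C₁, C₂`) is averaged: `T = (1 - λ) • Id + λ • S` for
some `λ ∈ (0, 1)` and some nonexpansive map `S`. -/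
theorem stmt_9 {X : Type*} [NormedAddCommGroup X] [InnerProductSpace ℝ X] [CompleteSpace X]
    (C₁ C₂ : Set X)
    (h₁ne : C₁.Nonempty) (h₁cl : IsClosed C₁) (h₁cv : Convex ℝ C₁)
    (h₂ne : C₂.Nonempty) (h₂cl : IsClosed C₂) (h₂cv : Convex ℝ C₂)
    (P₁ P₂ : X → X)
    (hP₁ : ∀ z, P₁ z ∈ C₁ ∧ ∀ x ∈ C₁, ‖z - P₁ z‖ ≤ ‖z - x‖)
    (hP₂ : ∀ z, P₂ z ∈ C₂ ∧ ∀ x ∈ C₂, ‖z - P₂ z‖ ≤ ‖z - x‖)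
    (F : X → X) (α : ℝ) (hα : 1 / 2 < α)
    (hF : ∀ x y : X, α * ‖F x - F y‖ ^ 2 ≤ ⟪F x - F y, x - y⟫)
    (T : X → X)
    (hT : ∀ z, T z = z - P₁ z + P₂ ((2 : ℝ) • P₁ z - z - F (P₁ z))) :
    ∃ lam : ℝ, 0 < lam ∧ lam < 1 ∧ ∃ S : X → X, LipschitzWith 1 S ∧
      ∀ z, T z = (1 - lam) • z + lam • S z := by
  obtain rfl : T = davisYin P₁ P₂ F := funext hT
  exact stmt_9_general (IsMetricProjection.isCocoercive_one hP₁ h₁cv)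
    (IsMetricProjection.isCocoercive_one hP₂ h₂cv) hα hF
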